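/- On the Weierstrass curve W : y² + (t²+1)xy + t²y = x³ + t²x² over the rational function field F = 𝔽₂(t), the point (t, t) is a nonsingular point of order exactly 10 in the group of points of W. -/

import Mathlib

/-- The rational function field `F = 𝔽₂(t)`. -/
noncomputable abbrev F : Type := RatFunc (ZMod 2)

/-- The variable `t` of `𝔽₂(t)`. -/
noncomputable def t : F := RatFunc.X

/-- The Weierstrass curve `W : y² + (t²+1)xy + t²y = x³ + t²x²` over `𝔽₂(t)`. -/
noncomputable def W : WeierstrassCurve.Affine F :=
  { a₁ := t ^ 2 + 1, a₂ := t ^ 2, a₃ := t ^ 2, a₄ := 0, a₆ := 0 }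

open WeierstrassCurve.Affine in
open scoped Classical in
theorem aux_dbl {x y x' y' l : F} (h : W.Nonsingular x y) (hd : y ≠ W.negY x y)
    (hl : 3 * x ^ 2 + 2 * W.a₂ * x + W.a₄ - W.a₁ * y = l * (y - W.negY x y))
    (hx : W.addX x x l = x') (hy : W.addY x x y l = y') :
    ∃ h' : W.Nonsingular x' y', Point.some x y h + Point.some x y h = Point.some x' y' h' := by
  have hs : W.slope x x y y = l := by
    rw [slope_of_Y_ne rfl hd, hl]
    exact mul_div_cancel_right₀ _ (sub_ne_zero.2 hd)
  subst hx hy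
  subst hs
  exact ⟨_, Point.add_self_of_Y_ne hd⟩

open WeierstrassCurve.Affine in
open scoped Classical in
theorem aux_add {x₁ y₁ x₂ y₂ x' y' l : F} (h₁ : W.Nonsingular x₁ y₁) (h₂ : W.Nonsingular x₂ y₂)
    (hd : x₁ ≠ x₂) (hl : y₁ - y₂ = l * (x₁ - x₂))
    (hx : W.addX x₁ x₂ l = x') (hy : W.addY x₁ x₂ y₁ l = y') :
    ∃ h' : W.Nonsingular x' y', Point.some x₁ y₁ h₁ + Point.some x₂ y₂ h₂ = Point.some x' y' h' := by
  have hs : W.slope x₁ x₂ y₁ y₂ = l := by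
    rw [slope_of_X_ne hd, hl]
    exact mul_div_cancel_right₀ _ (sub_ne_zero.2 hd)
  subst hx hy
  subst hs
  exact ⟨_, Point.add_of_X_ne hd⟩

theorem two_zero : (2 : F) = 0 := by
  have h : (2 : ZMod 2) = 0 := by decide
  have := congrArg (algebraMap (ZMod 2) F) h
  rwa [map_ofNat, map_zero] at this

theorem t_ne : t ≠ 0 := RatFunc.X_ne_zero

theorem poly_ne (p : Polynomial (ZMod 2)) (hp : p ≠ 0) : Polynomial.aeval t p ≠ 0 := by
  have : Polynomial.aeval t p = algebraMap (Polynomial (ZMod 2)) F p := by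
    rw [t, ← RatFunc.algebraMap_X, Polynomial.aeval_algebraMap_apply, Polynomial.aeval_X_left_apply]
  rw [this]
  exact RatFunc.algebraMap_ne_zero hp

theorem t_ne_one : t + 1 ≠ 0 := by
  have := poly_ne (Polynomial.X + Polynomial.C 1) (Polynomial.X_add_C_ne_zero 1)
  simpa using this

theorem q_ne : t ^ 2 + t + 1 ≠ 0 := by
  have := poly_ne (Polynomial.X ^ 2 + Polynomial.X + 1) (by
    intro h
    have := congrArg (Polynomial.eval 0) h
    simp at this)
  simpa using this

open WeierstrassCurve.Affine in
open scoped Classical in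
/-- On `W : y² + (t²+1)xy + t²y = x³ + t²x²` over `𝔽₂(t)`, the point `(t, t)` is a
nonsingular point of order exactly 10 in the group of points of `W`. -/
theorem point_t_t_has_order_ten :
    ∃ h : W.Nonsingular t t, addOrderOf (WeierstrassCurve.Affine.Point.some t t h) = 10 := by
  have h2 := two_zero
  have ht := t_ne
  have ht1 := t_ne_one
  have hq := q_ne
  have hd1 : t ≠ W.negY t t := by
    intro h
    have : t * (t ^ 2 + t + 1) = 0 := by
      simp only [negY, W] at h
      linear_combination h - t * h2
    exact mul_ne_zero ht hq this
  have h : W.Nonsingular t t := by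
    rw [nonsingular_iff]
    refine ⟨?_, Or.inr hd1⟩
    rw [equation_iff]
    simp only [W]
    linear_combination t ^ 2 * h2
  refine ⟨h, ?_⟩
  obtain ⟨n2, e2⟩ := aux_dbl (x' := 0) (y' := t ^ 2) (l := 1) h hd1
    (by simp only [negY, W]; grind) (by simp only [addX, W]; grind)
    (by simp only [addY, negAddY, addX, negY, W]; grind)
  obtain ⟨n4, e4⟩ := aux_dbl (x' := t ^ 2) (y' := 0) (l := t ^ 2 + 1) n2
    (by
      intro h
      simp only [negY, W] at h
      exact pow_ne_zero 2 ht (by grind))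
    (by simp only [negY, W]; grind) (by simp only [addX, W]; grind)
    (by simp only [addY, negAddY, addX, negY, W]; grind)
  obtain ⟨n6, e6⟩ := aux_add (x' := t ^ 2) (y' := t ^ 4) (l := 1) n4 n2 (pow_ne_zero 2 ht)
    (by grind) (by simp only [addX, W]; grind)
    (by simp only [addY, negAddY, addX, negY, W]; grind)
  have e10 : Point.some _ _ n6 + Point.some _ _ n4 = 0 :=
    Point.add_of_Y_eq rfl (by simp only [negY, W]; grind)
  set P := Point.some t t h with hP
  have E2 : 2 • P = Point.some _ _ n2 := by rw [two_nsmul, e2]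
  have E4 : 4 • P = Point.some _ _ n4 := by
    rw [show 4 = 2 + 2 from rfl, add_nsmul, E2, e4]
  have E10 : 10 • P = 0 := by
    rw [show 10 = (4 + 2) + 4 from rfl, add_nsmul, add_nsmul, E2, E4, e6, e10]
  refine addOrderOf_eq_of_nsmul_and_div_prime_nsmul (by norm_num) E10 ?_
  intro p hp hpd
  have hp' : p = 2 ∨ p = 5 := by
    have : p ∣ 2 * 5 := hpd
    rcases (Nat.Prime.dvd_mul hp).1 this with h | h
    · exact Or.inl ((Nat.prime_dvd_prime_iff_eq hp Nat.prime_two).1 h)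
    · exact Or.inr ((Nat.prime_dvd_prime_iff_eq hp Nat.prime_five).1 h)
  rcases hp' with rfl | rfl
  · intro h5
    have h5' : 4 • P + P = 0 := by rw [← succ_nsmul]; exact h5
    rw [E4, add_eq_zero_iff_eq_neg, hP, Point.neg_some, Point.some.injEq] at h5'
    have : t * (t + 1) = 0 := by linear_combination h5'.1 + t * h2
    exact mul_ne_zero ht ht1 this
  · rw [show 10 / 5 = 2 from rfl, E2]
    exact Point.some_ne_zero _
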